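/- arXiv:1411.7467 — 2 statements merged into one kernel-verified Lean document; each statement's English description precedes it below -/
import Mathlib

section
/- Let γ ≥ 1/2 be a half-integer and j ∈ {−1/2, 0, 1/2, 1, …} with j > γ − 1. Then for every M ∈ {j+1−γ, j+2−γ, …}, the restriction Q_M of the Casimir 𝒬 of F_γ ⊗ D⁺_j to the finite-dimensional subspace V_M is diagonalizable, and its eigenvalues are exactly the pairwise distinct values q_(μ) = −(j+μ)(j+μ+1) for μ ∈ {−γ, …, min(γ, M−j−1)}; in particular the eigenvalues do not depend on M. -/
/-!
The operators `J₀`, `J₊`, `J₋` satisfy the `sl₂` relations (`J0_Jp`, `Jm_Jp`), so `Q` commutes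
with `J₊` and acts on a vector of weight `m` killed by `J₋` as the scalar `-m(m-1)`. The vector
`psiLW G K t` is such a vector, of weight `m = j + μ + 1` with `μ = t - γ`, so its eigenvalue is
`q_(μ)`. Since `J₊` is injective on `F_γ ⊗ D⁺_j` (`Jp_injective`), applying it `M' - t` times gives,
for every `t ≤ M'`, a nonzero eigenvector in `V_M` with eigenvalue `q_(μ)`.
The condition `j > γ - 1` makes these eigenvalues pairwise distinct (`qe_injective`), so the
eigenvectors are linearly independent; they are as many as the spanning vectors of `V_M`, hence
they form a basis of `V_M`, from which all claims follow.
-/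

/-!
Statement 0: lowest weight vectors ψ_(μ) in the coupling F_γ ⊗ D⁺_j for sl(2,ℝ).

Conventions: γ = G/2 with `G : ℕ`, `1 ≤ G`; j = (K-1)/2 with `K : ℕ` (so j ∈ {-1/2,0,1/2,...}).
The space F_γ ⊗ D⁺_j has basis indexed by `(ν, k) : Fin (G+1) × ℕ`, the basis vector
`single (ν,k) 1` representing |γ, ν-γ⟩ ⊗ |j, j+1+k⟩.
-/

noncomputable section

/-- Principal branch of the complex square root. -/
def csqrt (z : ℂ) : ℂ := z ^ ((1 : ℂ) / 2)

/-- C₊(j,m) = i √(j-m) √(j+m+1). -/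
def Cp (j m : ℂ) : ℂ := Complex.I * csqrt (j - m) * csqrt (j + m + 1)

/-- C₋(j,m) = i √(j+m) √(j-m+1). -/
def Cm (j m : ℂ) : ℂ := Complex.I * csqrt (j + m) * csqrt (j - m + 1)

/-- γ = G/2, as a complex number. -/
def gam (G : ℕ) : ℂ := (G : ℂ) / 2

/-- j = (K-1)/2, as a complex number. -/
def jd (K : ℕ) : ℂ := ((K : ℂ) - 1) / 2

/-- μ = ν - γ for ν : Fin (G+1). -/
def muc (G : ℕ) (ν : Fin (G + 1)) : ℂ := ((ν : ℕ) : ℂ) - gam G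

/-- m = j + 1 + k for k : ℕ. -/
def md (K : ℕ) (k : ℕ) : ℂ := jd K + 1 + (k : ℂ)

/-- The vector space F_γ ⊗ D⁺_j. -/
abbrev W (G : ℕ) := (Fin (G + 1) × ℕ) →₀ ℂ

/-- Basis vector with coefficient, with out-of-range indices giving 0. -/
def eV (G : ℕ) (i k : ℤ) (c : ℂ) : W G :=
  if h : 0 ≤ i ∧ i < (G : ℤ) + 1 ∧ 0 ≤ k then
    Finsupp.single ((⟨i.toNat, by omega⟩ : Fin (G + 1)), k.toNat) c
  else 0

/-- 𝒥₀ = J₀ ⊗ 1 + 1 ⊗ J₀. -/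
def J0 (G K : ℕ) : W G →ₗ[ℂ] W G :=
  Finsupp.lsum ℂ fun p => LinearMap.toSpanSingleton ℂ (W G)
    (Finsupp.single p (muc G p.1 + md K p.2))

/-- 𝒥₊ = J₊ ⊗ 1 + 1 ⊗ J₊. -/
def Jp (G K : ℕ) : W G →ₗ[ℂ] W G :=
  Finsupp.lsum ℂ fun p => LinearMap.toSpanSingleton ℂ (W G)
    (eV G ((p.1 : ℕ) + 1) (p.2 : ℕ) (Cp (gam G) (muc G p.1)) +
      eV G (p.1 : ℕ) ((p.2 : ℕ) + 1) (Cp (jd K) (md K p.2)))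

/-- 𝒥₋ = J₋ ⊗ 1 + 1 ⊗ J₋. -/
def Jm (G K : ℕ) : W G →ₗ[ℂ] W G :=
  Finsupp.lsum ℂ fun p => LinearMap.toSpanSingleton ℂ (W G)
    (eV G ((p.1 : ℕ) - 1) (p.2 : ℕ) (Cm (gam G) (muc G p.1)) +
      eV G (p.1 : ℕ) ((p.2 : ℕ) - 1) (Cm (jd K) (md K p.2)))

/-- The Casimir 𝒬 = -𝒥₀(𝒥₀+1) + 𝒥₋𝒥₊. -/
def Qcas (G K : ℕ) : W G →ₗ[ℂ] W G :=
  -(J0 G K ∘ₗ (J0 G K + LinearMap.id)) + Jm G K ∘ₗ Jp G K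

/-- The lowest weight vector ψ_(μ), μ = t - γ:
ψ_(μ) = Σ_{ν=-γ}^{μ} (-1)^{γ+ν} (Π_{σ=-γ}^{ν-1} C₊(j, j+μ-σ)/C₊(γ,σ)) |γ,ν⟩ ⊗ |j, j+1+μ-ν⟩. -/
def psiLW (G K : ℕ) (t : Fin (G + 1)) : W G :=
  ∑ s ∈ Finset.range (t.1 + 1),
    eV G (s : ℤ) ((t.1 : ℤ) - (s : ℤ))
      ((-1 : ℂ) ^ s *
        ∏ r ∈ Finset.range s,
          Cp (jd K) (jd K + ((t.1 : ℕ) : ℂ) - (r : ℂ)) / Cp (gam G) ((r : ℂ) - gam G))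

/-- q_(μ) = -(j+μ)(j+μ+1). -/
def qe (G K : ℕ) (t : Fin (G + 1)) : ℂ :=
  -((jd K + muc G t) * (jd K + muc G t + 1))

/-- The 𝒥₀-eigenvalue-M subspace V_M of F_γ ⊗ D⁺_j, for M = j+1-γ+M', M' : ℕ:
it is spanned by the basis vectors |γ,ν-γ⟩⊗|j,j+1+k⟩ with ν + k = M'. -/
def VM (G : ℕ) (M' : ℕ) : Submodule ℂ (W G) :=
  Submodule.span ℂ
    {w : W G | ∃ p : Fin (G + 1) × ℕ, (p.1 : ℕ) + p.2 = M' ∧ w = Finsupp.single p 1}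

/-- A linear operator is diagonalizable on an invariant subspace `p` iff `p` is spanned by
eigenvectors of the operator lying in `p`. -/
def DiagOn {V : Type*} [AddCommGroup V] [Module ℂ V]
    (f : V →ₗ[ℂ] V) (p : Submodule ℂ V) : Prop :=
  Submodule.span ℂ {w : V | w ∈ p ∧ ∃ c : ℂ, f w = c • w} = p

/-! ### The operators on basis vectors and the commutation relations -/

theorem csqrt_sq (z : ℂ) : csqrt z ^ 2 = z := by
  unfold csqrt
  simp [one_div]

theorem csqrt_zero : csqrt 0 = 0 := by
  simp [csqrt]

theorem csqrt_ne_zero {z : ℂ} (hz : z ≠ 0) : csqrt z ≠ 0 := by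
  intro h
  have := csqrt_sq z
  rw [h] at this
  exact hz (by rw [← this]; simp)

/-- `C₋(j, m+1) = C₊(j, m)`, with the two square roots in the opposite order. -/
theorem Cm_eq_Cp {j m m' : ℂ} (h : m' = m + 1) : Cm j m' = Cp j m := by
  subst h
  unfold Cm Cp
  rw [show j + (m + 1) = j + m + 1 by ring, show j - (m + 1) + 1 = j - m by ring]
  ring

theorem Cp_sq (j m : ℂ) : Cp j m ^ 2 = -((j - m) * (j + m + 1)) := by
  unfold Cp
  rw [mul_pow, mul_pow, csqrt_sq, csqrt_sq, Complex.I_sq]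
  ring

theorem Cp_ne_zero {j m : ℂ} (h₁ : j - m ≠ 0) (h₂ : j + m + 1 ≠ 0) : Cp j m ≠ 0 :=
  mul_ne_zero (mul_ne_zero Complex.I_ne_zero (csqrt_ne_zero h₁)) (csqrt_ne_zero h₂)

theorem eV_smul (G : ℕ) (i k : ℤ) (c : ℂ) : eV G i k c = c • eV G i k 1 := by
  unfold eV
  split_ifs <;> simp

theorem eV_nat (G : ℕ) (ν : Fin (G + 1)) (k : ℕ) (c : ℂ) :
    eV G ((ν : ℕ) : ℤ) (k : ℤ) c = Finsupp.single (ν, k) c := by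
  unfold eV
  rw [dif_pos (by have := ν.2; omega)]
  simp

theorem eV_of_not {G : ℕ} {i k : ℤ} (h : ¬(0 ≤ i ∧ i < (G : ℤ) + 1 ∧ 0 ≤ k)) (c : ℂ) :
    eV G i k c = 0 := by
  unfold eV
  rw [dif_neg h]

theorem exists_nat_of_range {G : ℕ} {i k : ℤ} (h : 0 ≤ i ∧ i < (G : ℤ) + 1 ∧ 0 ≤ k) :
    ∃ (ν : Fin (G + 1)) (n : ℕ), i = ((ν : ℕ) : ℤ) ∧ k = (n : ℤ) :=
  ⟨⟨i.toNat, by omega⟩, k.toNat, by simp; omega, by omega⟩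

/-- `J₀` on basis vectors, valid for all integer labels. -/
theorem J0_eV (G K : ℕ) (i k : ℤ) :
    J0 G K (eV G i k 1) = ((i : ℂ) - gam G + (jd K + 1 + k)) • eV G i k 1 := by
  by_cases h : 0 ≤ i ∧ i < (G : ℤ) + 1 ∧ 0 ≤ k
  · obtain ⟨ν, n, rfl, rfl⟩ := exists_nat_of_range h
    rw [eV_nat]
    simp [J0, muc, md]
  · simp [eV_of_not h]

/-- `J₊` on basis vectors. It is valid for all integer labels, since the coefficients that
would lead from an out-of-range label into the allowed range vanish. -/
theorem Jp_eV (G K : ℕ) (i k : ℤ) :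
    Jp G K (eV G i k 1) = Cp (gam G) ((i : ℂ) - gam G) • eV G (i + 1) k 1
      + Cp (jd K) (jd K + 1 + k) • eV G i (k + 1) 1 := by
  by_cases h : 0 ≤ i ∧ i < (G : ℤ) + 1 ∧ 0 ≤ k
  · obtain ⟨ν, n, rfl, rfl⟩ := exists_nat_of_range h
    rw [← eV_smul, ← eV_smul, eV_nat]
    simp [Jp, muc, md]
  · rw [eV_of_not h, map_zero]
    have h₁ : Cp (gam G) ((i : ℂ) - gam G) • eV G (i + 1) k 1 = 0 := by
      by_cases hi : i = -1
      · subst hi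
        simp [Cp, csqrt_zero]
      · rw [eV_of_not (by omega), smul_zero]
    have h₂ : Cp (jd K) (jd K + 1 + k) • eV G i (k + 1) 1 = 0 := by
      by_cases hk : k = -1
      · subst hk
        simp [Cp, csqrt_zero]
      · rw [eV_of_not (by omega), smul_zero]
    rw [h₁, h₂, add_zero]

/-- `J₋` on basis vectors, for all integer labels; the coefficients `C₋` are written as the
equal coefficients `C₊` of the reverse transition. -/
theorem Jm_eV (G K : ℕ) (i k : ℤ) :
    Jm G K (eV G i k 1) = Cp (gam G) ((i : ℂ) - 1 - gam G) • eV G (i - 1) k 1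
      + Cp (jd K) (jd K + k) • eV G i (k - 1) 1 := by
  by_cases h : 0 ≤ i ∧ i < (G : ℤ) + 1 ∧ 0 ≤ k
  · obtain ⟨ν, n, rfl, rfl⟩ := exists_nat_of_range h
    rw [← eV_smul, ← eV_smul, eV_nat]
    have h₁ : Cm (gam G) (muc G ν) = Cp (gam G) ((((ν : ℕ) : ℤ) : ℂ) - 1 - gam G) :=
      Cm_eq_Cp (by simp only [muc, Int.cast_natCast]; ring)
    have h₂ : Cm (jd K) (md K n) = Cp (jd K) (jd K + ((n : ℤ) : ℂ)) :=
      Cm_eq_Cp (by simp [md]; ring)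
    rw [← h₁, ← h₂]
    simp [Jm]
  · rw [eV_of_not h, map_zero]
    have h₁ : Cp (gam G) ((i : ℂ) - 1 - gam G) • eV G (i - 1) k 1 = 0 := by
      by_cases hi : i = G + 1
      · subst hi
        have : gam G - ((((G : ℤ) + 1 : ℤ) : ℂ) - 1 - gam G) = 0 := by
          simp only [gam]
          push_cast
          ring
        simp only [Cp, this, csqrt_zero, mul_zero, zero_mul, zero_smul]
      · rw [eV_of_not (by omega), smul_zero]
    have h₂ : Cp (jd K) (jd K + k) • eV G i (k - 1) 1 = 0 := by
      by_cases hk : k = 0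
      · subst hk
        simp [Cp, csqrt_zero]
      · rw [eV_of_not (by omega), smul_zero]
    rw [h₁, h₂, add_zero]

theorem hom_ext_eV {G : ℕ} {f g : W G →ₗ[ℂ] W G}
    (h : ∀ i k : ℤ, f (eV G i k 1) = g (eV G i k 1)) : f = g := by
  refine Finsupp.lhom_ext' fun p => LinearMap.ext_ring ?_
  have := h ((p.1 : ℕ) : ℤ) (p.2 : ℤ)
  rw [eV_nat] at this
  simpa using this

theorem J0_Jp (G K : ℕ) (w : W G) :
    J0 G K (Jp G K w) = Jp G K (J0 G K w) + Jp G K w := by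
  suffices h : J0 G K ∘ₗ Jp G K = Jp G K ∘ₗ J0 G K + Jp G K from LinearMap.congr_fun h w
  refine hom_ext_eV fun i k => ?_
  simp only [LinearMap.comp_apply, LinearMap.add_apply, J0_eV, Jp_eV, map_add, map_smul]
  push_cast
  module

theorem Jm_Jp (G K : ℕ) (w : W G) :
    Jm G K (Jp G K w) = Jp G K (Jm G K w) + (2 : ℂ) • J0 G K w := by
  suffices h : Jm G K ∘ₗ Jp G K = Jp G K ∘ₗ Jm G K + (2 : ℂ) • J0 G K from
    LinearMap.congr_fun h w
  refine hom_ext_eV fun i k => ?_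
  simp only [LinearMap.comp_apply, LinearMap.add_apply, LinearMap.smul_apply, J0_eV, Jp_eV,
    Jm_eV, map_add, map_smul]
  push_cast
  simp only [add_sub_cancel_right, sub_add_cancel]
  have e₁ : jd K + ((k : ℂ) + 1) = jd K + 1 + k := by ring
  have e₂ : jd K + 1 + ((k : ℂ) - 1) = jd K + k := by ring
  simp only [e₁, e₂]
  have a := Cp_sq (gam G) ((i : ℂ) - gam G)
  have b := Cp_sq (gam G) ((i : ℂ) - 1 - gam G)
  have c := Cp_sq (jd K) (jd K + 1 + k)
  have d := Cp_sq (jd K) (jd K + k)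
  linear_combination (norm := module) (a - b + c - d) • (eV G i k (1 : ℂ))

theorem Qcas_apply (G K : ℕ) (w : W G) :
    Qcas G K w = -(J0 G K (J0 G K w) + J0 G K w) + Jm G K (Jp G K w) := by
  simp [Qcas]

/-- The Casimir commutes with the raising operator. -/
theorem Qcas_Jp (G K : ℕ) (w : W G) : Qcas G K (Jp G K w) = Jp G K (Qcas G K w) := by
  simp only [Qcas_apply, Jm_Jp, J0_Jp, map_add, map_neg, map_smul]
  module

/-! ### The weight spaces -/

theorem single_mem_VM {G M : ℕ} (p : Fin (G + 1) × ℕ) (h : (p.1 : ℕ) + p.2 = M) :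
    Finsupp.single p (1 : ℂ) ∈ VM G M :=
  Submodule.subset_span ⟨p, h, rfl⟩

theorem eV_mem_VM {G M : ℕ} {i k : ℤ} (h : i + k = M) : eV G i k 1 ∈ VM G M := by
  by_cases hr : 0 ≤ i ∧ i < (G : ℤ) + 1 ∧ 0 ≤ k
  · obtain ⟨ν, n, rfl, rfl⟩ := exists_nat_of_range hr
    rw [eV_nat]
    exact single_mem_VM _ (by simp; omega)
  · rw [eV_of_not hr]
    exact Submodule.zero_mem _

theorem VM_induction {G M : ℕ} {P : Submodule ℂ (W G)}
    (h : ∀ i k : ℤ, i + k = M → eV G i k 1 ∈ P) : VM G M ≤ P := by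
  refine Submodule.span_le.2 ?_
  rintro _ ⟨p, hp, rfl⟩
  have := h ((p.1 : ℕ) : ℤ) (p.2 : ℤ) (by omega)
  rwa [eV_nat] at this

theorem Jp_mem_VM {G K M : ℕ} {w : W G} (hw : w ∈ VM G M) : Jp G K w ∈ VM G (M + 1) := by
  suffices h : VM G M ≤ (VM G (M + 1)).comap (Jp G K) from h hw
  refine VM_induction fun i k hik => ?_
  rw [Submodule.mem_comap, Jp_eV]
  exact Submodule.add_mem _ (Submodule.smul_mem _ _ (eV_mem_VM (by push_cast; omega)))
    (Submodule.smul_mem _ _ (eV_mem_VM (by push_cast; omega)))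

theorem J0_of_mem_VM {G K M : ℕ} {w : W G} (hw : w ∈ VM G M) :
    J0 G K w = ((M : ℂ) - gam G + (jd K + 1)) • w := by
  suffices h : VM G M ≤
      LinearMap.eqLocus (J0 G K) (((M : ℂ) - gam G + (jd K + 1)) • LinearMap.id) from h hw
  refine VM_induction fun i k hik => ?_
  rw [LinearMap.mem_eqLocus, J0_eV]
  have : (M : ℂ) = i + k := by exact_mod_cast hik.symm
  rw [this, LinearMap.smul_apply, LinearMap.id_apply]
  congr 1
  ring

/-- `J₊` is injective: at the least `ν` in the support of `w`, only the second tensor factor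
contributes to the coefficients of `J₊ w`, and its coefficients `C₊(j, m)` do not vanish. -/
theorem Jp_injective (G K : ℕ) {w : W G} (hw : Jp G K w = 0) : w = 0 := by
  have coeff : ∀ (ν : Fin (G + 1)) (k : ℕ) (w : W G), (∀ ν' < ν, ∀ n, w (ν', n) = 0) →
      Jp G K w (ν, k + 1) = Cp (jd K) (jd K + 1 + k) * w (ν, k) := by
    intro ν k w hw
    rw [← w.sum_single, Finsupp.sum, map_sum, Finsupp.finsetSum_apply, Finsupp.finsetSum_apply,
      Finset.mul_sum]
    refine Finset.sum_congr rfl ?_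
    rintro ⟨ν', n⟩ hmem
    have hge : ν ≤ ν' := by
      by_contra hlt
      exact (Finsupp.mem_support_iff.1 hmem) (hw ν' (not_le.1 hlt) n)
    have e : Finsupp.single (ν', n) (w (ν', n)) = w (ν', n) • eV G ((ν' : ℕ) : ℤ) (n : ℤ) 1 := by
      rw [eV_nat]; simp
    have z : eV G (((ν' : ℕ) : ℤ) + 1) (n : ℤ) 1 (ν, k + 1) = 0 := by
      by_cases hr : 0 ≤ ((ν' : ℕ) : ℤ) + 1 ∧ ((ν' : ℕ) : ℤ) + 1 < (G : ℤ) + 1 ∧ 0 ≤ (n : ℤ)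
      · obtain ⟨a, b, ha, hb⟩ := exists_nat_of_range hr
        rw [ha, hb, eV_nat, Finsupp.single_apply, if_neg]
        rintro ⟨⟩
        have : (ν : ℕ) ≤ ν' := hge
        omega
      · rw [eV_of_not hr, Finsupp.zero_apply]
    rw [e, map_smul, Jp_eV, show (n : ℤ) + 1 = ((n + 1 : ℕ) : ℤ) by push_cast; rfl, eV_nat,
      eV_nat]
    simp only [Finsupp.smul_apply, Finsupp.add_apply, z, Finsupp.single_apply, Prod.mk.injEq,
      smul_eq_mul]
    by_cases h : ν' = ν ∧ n = k
    · obtain ⟨rfl, rfl⟩ := h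
      simp
      ring
    · have h' : ¬ (ν' = ν ∧ n + 1 = k + 1) := by omega
      rw [if_neg h, if_neg h']
      simp
  have key : ∀ (s : ℕ) (ν : Fin (G + 1)), (ν : ℕ) = s → ∀ k, w (ν, k) = 0 := by
    intro s
    induction s using Nat.strong_induction_on with
    | _ s ih =>
      intro ν hν k
      have h := coeff ν k w fun ν' hlt n => ih ν' (by rw [← hν]; exact hlt) ν' rfl n
      rw [hw, Finsupp.zero_apply, eq_comm, mul_eq_zero] at h
      refine h.resolve_left (Cp_ne_zero ?_ ?_)
      · have : ((k : ℂ) + 1) ≠ 0 := Nat.cast_add_one_ne_zero k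
        intro h0
        exact this (by linear_combination -h0)
      · have : (((K + k : ℕ) : ℂ) + 1) ≠ 0 := Nat.cast_add_one_ne_zero _
        intro h0
        refine this ?_
        push_cast
        unfold jd at h0
        linear_combination h0
  ext ⟨ν, k⟩
  exact key ν ν rfl k

/-! ### Lowest weight vectors and their descendants -/

theorem psiLW_mem (G K : ℕ) (t : Fin (G + 1)) : psiLW G K t ∈ VM G t := by
  refine Submodule.sum_mem _ fun s _ => ?_
  rw [eV_smul]
  exact Submodule.smul_mem _ _ (eV_mem_VM (by ring))

theorem psiLW_ne_zero (G K : ℕ) (t : Fin (G + 1)) : psiLW G K t ≠ 0 := by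
  intro h
  have h0 : psiLW G K t (0, (t : ℕ)) = 1 := by
    unfold psiLW
    rw [Finset.sum_range_succ', Finsupp.add_apply, Finsupp.finsetSum_apply,
      Finset.sum_eq_zero]
    · have := eV_nat G 0 t 1
      simp at this ⊢
      simp [this]
    · intro s hs
      have hs' := Finset.mem_range.1 hs
      have := t.2
      obtain ⟨a, b, ha, hb⟩ := exists_nat_of_range (G := G) (i := ((s + 1 : ℕ) : ℤ))
        (k := ((t : ℕ) : ℤ) - ((s + 1 : ℕ) : ℤ)) (by push_cast; omega)
      rw [hb, ha, eV_nat, Finsupp.single_apply, if_neg]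
      rintro ⟨⟩
      simp at ha
      omega
  rw [h, Finsupp.zero_apply] at h0
  exact zero_ne_one h0

/-- The recursion of the coefficients of `ψ` makes `J₋ ψ` a telescoping sum whose two end terms
carry out-of-range labels. -/
theorem Jm_psiLW (G K : ℕ) (t : Fin (G + 1)) : Jm G K (psiLW G K t) = 0 := by
  unfold psiLW
  set a : ℕ → ℂ := fun s => (-1 : ℂ) ^ s * ∏ r ∈ Finset.range s,
    Cp (jd K) (jd K + ((t.1 : ℕ) : ℂ) - (r : ℂ)) / Cp (gam G) ((r : ℂ) - gam G) with ha
  set f : ℕ → W G := fun s =>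
    (a s * Cp (gam G) ((s : ℂ) - 1 - gam G)) • eV G ((s : ℤ) - 1) ((t : ℕ) - (s : ℤ)) 1 with hf
  have step : ∀ s ∈ Finset.range (t.1 + 1),
      Jm G K (eV G (s : ℤ) ((t.1 : ℤ) - (s : ℤ)) (a s)) = f s - f (s + 1) := by
    intro s hs
    rw [eV_smul, map_smul, Jm_eV]
    simp only [hf]
    push_cast
    rw [show ((t : ℕ) : ℤ) - ((s : ℤ) + 1) = (t : ℕ) - (s : ℤ) - 1 by ring,
      add_sub_cancel_right, add_sub_cancel_right]
    by_cases hst : s = t.1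
    · rw [eV_of_not (k := ((t : ℕ) : ℤ) - s - 1) (by omega)]
      module
    · have hlt : s < t.1 := by have := Finset.mem_range.1 hs; omega
      have hne : Cp (gam G) ((s : ℂ) - gam G) ≠ 0 := by
        apply Cp_ne_zero
        · have hG : s < G := by have := t.2; omega
          have : (G : ℂ) - s ≠ 0 := sub_ne_zero.2 (by exact_mod_cast hG.ne')
          intro h0
          refine this ?_
          unfold gam at h0
          linear_combination h0
        · have : (s : ℂ) + 1 ≠ 0 := Nat.cast_add_one_ne_zero s
          intro h0
          exact this (by linear_combination h0)
      have hrec : a (s + 1) * Cp (gam G) ((s : ℂ) - gam G) =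
          -(a s * Cp (jd K) (jd K + ((t : ℕ) : ℂ) - s)) := by
        simp only [ha, Finset.prod_range_succ, pow_succ]
        field_simp
      rw [hrec, show jd K + (((t : ℕ) : ℂ) - s) = jd K + ((t : ℕ) : ℂ) - s by ring]
      module
  rw [map_sum, Finset.sum_congr rfl step, Finset.sum_range_sub']
  simp only [hf]
  rw [eV_of_not (by simp), eV_of_not (by push_cast; omega)]
  simp

theorem Qcas_psiLW (G K : ℕ) (t : Fin (G + 1)) :
    Qcas G K (psiLW G K t) = qe G K t • psiLW G K t := by
  rw [Qcas_apply, Jm_Jp, Jm_psiLW, map_zero]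
  simp only [J0_of_mem_VM (psiLW_mem G K t), map_smul]
  unfold qe muc
  module

/-- The descendant `J₊ⁿ ψ_(μ)` of the lowest weight vector with `μ = t - γ`. -/
def desc (G K : ℕ) (t : Fin (G + 1)) : ℕ → W G
  | 0 => psiLW G K t
  | n + 1 => Jp G K (desc G K t n)

theorem desc_mem (G K : ℕ) (t : Fin (G + 1)) (n : ℕ) : desc G K t n ∈ VM G (t + n) := by
  induction n with
  | zero => exact psiLW_mem G K t
  | succ n ih => exact Jp_mem_VM ih

theorem desc_ne_zero (G K : ℕ) (t : Fin (G + 1)) (n : ℕ) : desc G K t n ≠ 0 := by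
  induction n with
  | zero => exact psiLW_ne_zero G K t
  | succ n ih => exact fun h => ih (Jp_injective G K h)

theorem Qcas_desc (G K : ℕ) (t : Fin (G + 1)) (n : ℕ) :
    Qcas G K (desc G K t n) = qe G K t • desc G K t n := by
  induction n with
  | zero => exact Qcas_psiLW G K t
  | succ n ih => rw [desc, Qcas_Jp, ih, map_smul]

/-- The hypothesis `G ≤ K` says `j > γ - 1`; then the numbers `j + μ + 1/2` are nonnegative, and
`q_(μ) = 1/4 - (j+μ+1/2)²`. -/
theorem qe_injective {G K : ℕ} (hGK : G ≤ K) {t t' : Fin (G + 1)}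
    (h : qe G K t = qe G K t') : t = t' := by
  obtain ⟨d, rfl⟩ := Nat.exists_eq_add_of_le hGK
  have h1 : (((t : ℕ) : ℂ) - (t' : ℕ)) * (d + (t : ℕ) + (t' : ℕ)) = 0 := by
    simp only [qe, muc, gam, jd] at h
    push_cast at h
    linear_combination -h
  rcases mul_eq_zero.1 h1 with h2 | h2
  · exact Fin.ext (by exact_mod_cast sub_eq_zero.1 h2)
  · have : d + (t : ℕ) + (t' : ℕ) = 0 := by exact_mod_cast h2
    exact Fin.ext (by omega)

/-- For j > γ-1 and every M = j+1-γ+M', the restriction of 𝒬 to V_M is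
diagonalizable, its eigenvalues are exactly the values q_(μ) for μ = t-γ with t ≤ M'
(i.e. μ ≤ min(γ, M-j-1)), independent of M, and these are pairwise distinct. -/
theorem Qcas_diagonalizable_on_VM (G K : ℕ) (hG : 1 ≤ G)
    (hj : ((K : ℝ) - 1) / 2 > (G : ℝ) / 2 - 1) (M' : ℕ) :
    DiagOn (Qcas G K) (VM G M') ∧
    (∀ c : ℂ,
      (∃ w ∈ VM G M', w ≠ 0 ∧ Qcas G K w = c • w) ↔
        ∃ t : Fin (G + 1), (t : ℕ) ≤ M' ∧ c = qe G K t) ∧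
    (∀ t t' : Fin (G + 1), (t : ℕ) ≤ M' → (t' : ℕ) ≤ M' →
      qe G K t = qe G K t' → t = t') := by
  have hGK : G ≤ K := by
    have h : (G : ℝ) < (K : ℝ) + 1 := by linarith
    have h' : G < K + 1 := by exact_mod_cast h
    omega
  let T := {t : Fin (G + 1) // (t : ℕ) ≤ M'}
  let v : T → W G := fun t => desc G K t.1 (M' - t.1)
  have hv_mem : ∀ t, v t ∈ VM G M' := fun t => by
    have h := desc_mem G K t.1 (M' - t.1)
    rwa [Nat.add_sub_cancel' t.2] at h
  have hv_eig : ∀ t, Qcas G K (v t) = qe G K t.1 • v t := fun t => Qcas_desc _ _ _ _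
  have hv_li : LinearIndependent ℂ v :=
    Module.End.eigenvectors_linearIndependent' (Qcas G K) (fun t : T => qe G K t.1)
      (fun t t' h => Subtype.ext (qe_injective hGK h)) v
      (fun t => ⟨Module.End.mem_eigenspace_iff.2 (hv_eig t), desc_ne_zero _ _ _ _⟩)
  -- `V_M` is spanned by as many vectors as there are indices `t`.
  let b : T → W G := fun t => Finsupp.single (t.1, M' - t.1) 1
  have hVM : VM G M' = Submodule.span ℂ (Set.range b) := by
    unfold VM
    congr 1
    ext w
    constructor
    · rintro ⟨⟨ν, k⟩, hp, rfl⟩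
      simp only at hp
      refine ⟨⟨ν, by omega⟩, ?_⟩
      simp only [b]
      rw [show M' - (ν : ℕ) = k by omega]
    · rintro ⟨t, rfl⟩
      exact ⟨_, Nat.add_sub_cancel' t.2, rfl⟩
  have hspan : Submodule.span ℂ (Set.range v) = VM G M' := by
    have hfin : FiniteDimensional ℂ (VM G M') := by
      rw [hVM]
      exact FiniteDimensional.span_of_finite ℂ (Set.finite_range b)
    refine Submodule.eq_of_le_of_finrank_le ?_ ?_
    · rw [Submodule.span_le]
      rintro _ ⟨t, rfl⟩
      exact hv_mem t
    · rw [finrank_span_eq_card hv_li, hVM]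
      exact finrank_range_le_card b
  refine ⟨?_, ?_, fun t t' _ _ h => qe_injective hGK h⟩
  · refine le_antisymm (Submodule.span_le.2 fun w hw => hw.1) ?_
    rw [← hspan]
    refine Submodule.span_mono ?_
    rintro _ ⟨t, rfl⟩
    exact ⟨by rw [hspan]; exact hv_mem t, _, hv_eig t⟩
  · intro c
    constructor
    · rintro ⟨w, hw, hw0, hwc⟩
      by_contra hc
      rw [← hspan] at hw
      obtain ⟨a, rfl⟩ := (Submodule.mem_span_range_iff_exists_fun ℂ).1 hw
      -- Comparing coefficients in `(Q - c) w = 0` shows that all of them vanish.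
      have h0 : ∑ t, (a t * (qe G K t.1 - c)) • v t = 0 := by
        rw [map_sum, Finset.smul_sum, ← sub_eq_zero, ← Finset.sum_sub_distrib] at hwc
        rw [← hwc]
        refine Finset.sum_congr rfl fun t _ => ?_
        rw [map_smul, hv_eig]
        module
      have h1 := Fintype.linearIndependent_iff.1 hv_li _ h0
      refine hw0 (Finset.sum_eq_zero fun t _ => ?_)
      have h2 : qe G K t.1 - c ≠ 0 := fun h => hc ⟨t.1, t.2, (sub_eq_zero.1 h).symm⟩
      rw [(mul_eq_zero.1 (h1 t)).resolve_right h2, zero_smul]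
    · rintro ⟨t, ht, rfl⟩
      exact ⟨v ⟨t, ht⟩, hv_mem _, desc_ne_zero _ _ _ _, hv_eig ⟨t, ht⟩⟩

end
end

section
/- Let γ ≥ 1/2 be a half-integer, ε ∈ {0, 1/2}, and let j be a real number with 2j ∈ ℤ and j − ε ∉ ℤ. Then for every M ∈ ε + γ + ℤ, the characteristic polynomial of the restriction Q_M of the Casimir 𝒬 of F_γ ⊗ C^ε_j to V_M equals Π_{μ=−γ}^{γ} (X − q_(μ)), where q_(μ) = −(j+μ)(j+μ+1); i.e. the eigenvalues of Q_M, with algebraic multiplicity, are exactly the values q_(μ), μ ∈ {−γ, …, γ}. -/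
/-!
In the basis |γ,ν-γ⟩ ⊗ |j,M-(ν-γ)⟩ the Casimir is a tridiagonal matrix (`QMmat_apply`). Its diagonal
and the products of opposite off-diagonal entries are polynomial in `j` and `M`, because the square
roots pair up (`Cp_mul_Cm`, `supE_mul_subE`). They agree with those of `q₀ - L`, where `L` is the
Hahn difference operator
  (L f)(x) = B(x) (f(x+1) - f(x)) - D(x) (f(x) - f(x-1)),  x = 0, …, N,
with `N = 2γ`, `B(x) = (x+α+1)(x-N)`, `D(x) = x(x-β-N-1)`, `α = j-M-γ`, `β = j+M-γ` and
`q₀ = -(j-γ)(j-γ+1)`. Since `j-ε ∉ ℤ` and `2j ∈ ℤ`, none of the relevant off-diagonal entries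
vanishes, so the two matrices are conjugate by a diagonal matrix.

In the basis of binomial functions `x ↦ choose x k` the operator `L` is upper bidiagonal, with
diagonal entries `k(k+α+β+1)` (`hahn_choose`), whence the eigenvalues of the Casimir are
`q₀ - k(k+2(j-γ)+1) = -(j+μ)(j+μ+1)` with `μ = k-γ`. Both conjugations are carried out at once in
`charpoly_tridiag`.
-/

/-!
Couplings F_γ ⊗ C^ε_j for sl(2,ℝ).

Conventions: γ = G/2 with `G : ℕ`, `1 ≤ G`; ε is encoded by `E : ℂ` (with `E = 0 ∨ E = 1/2`);
j ∈ ℂ. The space F_γ ⊗ C^ε_j has basis indexed by `(ν, z) : Fin (G+1) × ℤ`, the basis vector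
`single (ν,z) 1` representing |γ, ν-γ⟩ ⊗ |j, ε+z⟩.
-/

noncomputable section

/-- m = ε + z for z : ℤ. -/
def mcont (E : ℂ) (z : ℤ) : ℂ := E + (z : ℂ)

/-- The vector space F_γ ⊗ C^ε_j. -/
abbrev Wc (G : ℕ) := (Fin (G + 1) × ℤ) →₀ ℂ

/-- Basis vector with coefficient, out-of-range F_γ indices giving 0. -/
def eVc (G : ℕ) (i : ℤ) (z : ℤ) (c : ℂ) : Wc G :=
  if h : 0 ≤ i ∧ i < (G : ℤ) + 1 then
    Finsupp.single ((⟨i.toNat, by omega⟩ : Fin (G + 1)), z) c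
  else 0

/-- 𝒥₀ = J₀ ⊗ 1 + 1 ⊗ J₀. -/
def J0c (G : ℕ) (E : ℂ) : Wc G →ₗ[ℂ] Wc G :=
  Finsupp.lsum ℂ fun p => LinearMap.toSpanSingleton ℂ (Wc G)
    (Finsupp.single p (muc G p.1 + mcont E p.2))

/-- 𝒥₊ = J₊ ⊗ 1 + 1 ⊗ J₊. -/
def Jpc (G : ℕ) (j E : ℂ) : Wc G →ₗ[ℂ] Wc G :=
  Finsupp.lsum ℂ fun p => LinearMap.toSpanSingleton ℂ (Wc G)
    (eVc G ((p.1 : ℕ) + 1) p.2 (Cp (gam G) (muc G p.1)) +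
      Finsupp.single (p.1, p.2 + 1) (Cp j (mcont E p.2)))

/-- 𝒥₋ = J₋ ⊗ 1 + 1 ⊗ J₋. -/
def Jmc (G : ℕ) (j E : ℂ) : Wc G →ₗ[ℂ] Wc G :=
  Finsupp.lsum ℂ fun p => LinearMap.toSpanSingleton ℂ (Wc G)
    (eVc G ((p.1 : ℕ) - 1) p.2 (Cm (gam G) (muc G p.1)) +
      Finsupp.single (p.1, p.2 - 1) (Cm j (mcont E p.2)))

/-- The Casimir 𝒬 = -𝒥₀(𝒥₀+1) + 𝒥₋𝒥₊. -/
def Qc (G : ℕ) (j E : ℂ) : Wc G →ₗ[ℂ] Wc G :=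
  -(J0c G E ∘ₗ (J0c G E + LinearMap.id)) + Jmc G j E ∘ₗ Jpc G j E

/-- The 𝒥₀-eigenvalue-M subspace V_M of F_γ ⊗ C^ε_j for M = ε + γ + M₀, M₀ : ℤ:
spanned by the |γ,ν-γ⟩⊗|j,ε+z⟩ with (ν-γ) + (ε+z) = M, i.e. z = G + M₀ - ν. -/
def VMc (G : ℕ) (M₀ : ℤ) : Submodule ℂ (Wc G) :=
  Submodule.span ℂ
    {w : Wc G | ∃ ν : Fin (G + 1), w = Finsupp.single (ν, (G : ℤ) + M₀ - (ν : ℕ)) 1}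

/-- q_(μ) = -(j+μ)(j+μ+1) with μ = t - γ. -/
def qc (G : ℕ) (j : ℂ) (t : Fin (G + 1)) : ℂ :=
  -((j + muc G t) * (j + muc G t + 1))

/-- The matrix of the restriction of 𝒬 to V_M (M = ε + γ + M₀) in the basis
|γ,ν-γ⟩⊗|j, M - (ν-γ)⟩, ν ∈ Fin (G+1): entry (ν,ν') is the coefficient of the ν-th basis
vector in the image of the ν'-th one. -/
def QMmat (G : ℕ) (j E : ℂ) (M₀ : ℤ) : Matrix (Fin (G + 1)) (Fin (G + 1)) ℂ :=
  fun ν ν' =>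
    (Qc G j E (Finsupp.single (ν', (G : ℤ) + M₀ - (ν' : ℕ)) 1))
      (ν, (G : ℤ) + M₀ - (ν : ℕ))


/-! ### The matrix of the Casimir -/

theorem csqrt_mul_self (z : ℂ) : csqrt z * csqrt z = z := by
  unfold csqrt
  rw [← sq, one_div]
  exact_mod_cast Complex.cpow_nat_inv_pow z two_ne_zero

theorem eVc_natCast (G : ℕ) (ν : Fin (G + 1)) (z : ℤ) (c : ℂ) :
    eVc G (ν : ℕ) z c = Finsupp.single (ν, z) c := by
  have h : 0 ≤ ((ν : ℕ) : ℤ) ∧ ((ν : ℕ) : ℤ) < (G : ℤ) + 1 := by have := ν.2; omega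
  simp [eVc, h]

theorem eVc_apply (G : ℕ) (i z : ℤ) (c : ℂ) (ν : Fin (G + 1)) (w : ℤ) :
    eVc G i z c (ν, w) = if ((ν : ℕ) : ℤ) = i ∧ w = z then c else 0 := by
  unfold eVc
  split_ifs with h1 h2 h2
  · obtain ⟨h2, rfl⟩ := h2
    subst h2
    simp
  · rw [Finsupp.single_apply, if_neg]
    rintro h
    rw [Prod.mk.injEq, Fin.ext_iff] at h
    simp only at h
    omega
  · have := ν.2
    omega
  · rfl

theorem J0c_single (G : ℕ) (E : ℂ) (p : Fin (G + 1) × ℤ) (c : ℂ) :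
    J0c G E (Finsupp.single p c) = Finsupp.single p (c * (muc G p.1 + mcont E p.2)) := by
  rw [J0c, Finsupp.lsum_single, LinearMap.toSpanSingleton_apply, Finsupp.smul_single, smul_eq_mul]

theorem Jpc_single (G : ℕ) (j E : ℂ) (p : Fin (G + 1) × ℤ) :
    Jpc G j E (Finsupp.single p 1) = eVc G ((p.1 : ℕ) + 1) p.2 (Cp (gam G) (muc G p.1)) +
      Finsupp.single (p.1, p.2 + 1) (Cp j (mcont E p.2)) := by
  simp [Jpc]

theorem Jmc_single (G : ℕ) (j E : ℂ) (p : Fin (G + 1) × ℤ) (c : ℂ) :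
    Jmc G j E (Finsupp.single p c) = c • (eVc G ((p.1 : ℕ) - 1) p.2 (Cm (gam G) (muc G p.1)) +
      Finsupp.single (p.1, p.2 - 1) (Cm j (mcont E p.2))) := by
  simp [Jmc]

/-- The index `i = G + 1` is allowed provided the coefficient vanishes there, as it does for the image
of the highest weight vector under `J₊`. -/
theorem Jmc_eVc_apply (G : ℕ) (j E : ℂ) (i z : ℤ) (c : ℂ) (hi : 0 ≤ i)
    (hc : i = G + 1 → c = 0) (hi' : i ≤ G + 1) (ν : Fin (G + 1)) (w : ℤ) :
    Jmc G j E (eVc G i z c) (ν, w) =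
      (if ((ν : ℕ) : ℤ) = i - 1 ∧ w = z then c * Cm (gam G) (i - gam G) else 0) +
      (if ((ν : ℕ) : ℤ) = i ∧ w = z - 1 then c * Cm j (mcont E z) else 0) := by
  rcases eq_or_lt_of_le hi' with h | h
  · have : eVc G i z c = 0 := by simp [eVc, h]
    rw [this, map_zero, hc h]
    simp
  · lift i to ℕ using hi
    have e := eVc_natCast G ⟨i, by omega⟩ z c
    simp only at e
    rw [e, Jmc_single, ← eVc_natCast]
    simp only [Finsupp.smul_apply, Finsupp.add_apply, eVc_apply, muc, smul_eq_mul, mul_add,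
      mul_ite, mul_zero, Int.cast_natCast]

/-- Diagonal entry of the Casimir on `V_M` at `ν = x`, with `M = E + γ + M₀`. -/
def diagE (G : ℕ) (j E : ℂ) (M₀ : ℤ) (x : ℕ) : ℂ :=
  -((E + gam G + M₀) * (E + gam G + M₀ + 1)) - (G - x) * (x + 1)
    - (j - (E + G + M₀ - x)) * (j + (E + G + M₀ - x) + 1)

/-- Entry of the Casimir on `V_M` at row `x`, column `x + 1`. -/
def supE (G : ℕ) (j E : ℂ) (M₀ : ℤ) (x : ℕ) : ℂ :=
  Cp j (E + G + M₀ - (x + 1)) * Cm (gam G) (x + 1 - gam G)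

/-- Entry of the Casimir on `V_M` at row `x + 1`, column `x`. The index is the column. -/
def subE (G : ℕ) (j E : ℂ) (M₀ : ℤ) (x : ℕ) : ℂ :=
  Cp (gam G) (x - gam G) * Cm j (E + G + M₀ - x)

theorem Cp_mul_Cm (j m : ℂ) : Cp j m * Cm j (m + 1) = -((j - m) * (j + m + 1)) := by
  have h1 := csqrt_mul_self (j - m)
  have h2 := csqrt_mul_self (j + m + 1)
  unfold Cp Cm
  rw [show j - (m + 1) + 1 = j - m by ring, show j + (m + 1) = j + m + 1 by ring]
  linear_combination (Complex.I ^ 2 * csqrt (j + m + 1) ^ 2) * h1 +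
    (Complex.I ^ 2 * (j - m)) * h2 + ((j - m) * (j + m + 1)) * Complex.I_sq

theorem QMmat_apply (G : ℕ) (j E : ℂ) (M₀ : ℤ) (x y : Fin (G + 1)) :
    QMmat G j E M₀ x y =
      (if (y : ℕ) = x then diagE G j E M₀ x else 0) +
      (if (y : ℕ) = x + 1 then supE G j E M₀ x else 0) +
      (if (y : ℕ) + 1 = x then subE G j E M₀ y else 0) := by
  have hc : ((y : ℕ) : ℤ) + 1 = G + 1 → Cp (gam G) (muc G y) = 0 := by
    intro h
    have h' : ((y : ℕ) : ℂ) = G := by exact_mod_cast (by omega : (y : ℕ) = G)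
    have : gam G - muc G y = 0 := by
      simp only [muc, gam, h']; ring
    simp [Cp, csqrt, this]
  have hy := y.2
  simp only [QMmat, Qc, LinearMap.add_apply, LinearMap.neg_apply, LinearMap.comp_apply,
    LinearMap.id_apply, map_add, J0c_single, Jpc_single, Finsupp.add_apply, Finsupp.neg_apply]
  rw [Jmc_eVc_apply _ _ _ _ _ _ (by omega) hc (by omega)]
  simp only [← eVc_natCast]
  rw [Jmc_eVc_apply _ _ _ _ _ _ (by omega) (by omega) (by omega)]
  simp only [eVc_apply]
  rcases lt_trichotomy (x : ℕ) y with h | h | h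
  · by_cases h2 : (y : ℕ) = x + 1
    · have e : ((y : ℕ) : ℂ) = x + 1 := by exact_mod_cast h2
      rw [if_neg (by omega), if_neg (by omega), if_neg (by omega), if_neg (by omega),
        if_pos (by omega), if_neg (by omega), if_neg (by omega), if_pos h2, if_neg (by omega)]
      simp [supE, mcont, e]
      exact Or.inl (by ring_nf)
    · rw [if_neg (by omega), if_neg (by omega), if_neg (by omega), if_neg (by omega),
        if_neg (by omega), if_neg (by omega), if_neg (by omega), if_neg h2, if_neg (by omega)]
      simp
  · obtain rfl : x = y := Fin.ext h
    rw [if_pos (by omega), if_pos (by omega), if_pos (by omega), if_neg (by omega),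
      if_neg (by omega), if_pos (by omega), if_pos rfl, if_neg (by omega), if_neg (by omega)]
    have h1 := Cp_mul_Cm (gam G) (muc G x)
    have h2 := Cp_mul_Cm j (mcont E (G + M₀ - (x : ℕ)))
    rw [show muc G x + 1 = (((x : ℕ) + 1 : ℤ) : ℂ) - gam G by simp [muc]; ring] at h1
    rw [show mcont E (G + M₀ - (x : ℕ)) + 1 = mcont E (G + M₀ - (x : ℕ) + 1) by
      simp [mcont]; ring] at h2
    rw [h1, h2]
    simp [diagE, mcont, muc, gam]
    ring
  · by_cases h2 : (y : ℕ) + 1 = x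
    · rw [if_neg (by omega), if_neg (by omega), if_neg (by omega), if_pos (by omega),
        if_neg (by omega), if_neg (by omega), if_neg (by omega), if_neg (by omega), if_pos h2]
      simp [subE, mcont, muc]
      exact Or.inl (by ring_nf)
    · rw [if_neg (by omega), if_neg (by omega), if_neg (by omega), if_neg (by omega),
        if_neg (by omega), if_neg (by omega), if_neg (by omega), if_neg (by omega), if_neg h2]
      simp

theorem supE_mul_subE (G : ℕ) (j E : ℂ) (M₀ : ℤ) (x : ℕ) :
    supE G j E M₀ x * subE G j E M₀ x =
      ((G - x) * (x + 1)) * ((j - (E + G + M₀ - x) + 1) * (j + (E + G + M₀ - x))) := by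
  have h1 := Cp_mul_Cm (gam G) (x - gam G)
  have h2 := Cp_mul_Cm j (E + G + M₀ - (x + 1))
  rw [show (x : ℂ) - gam G + 1 = x + 1 - gam G by ring] at h1
  rw [show E + G + M₀ - ((x : ℂ) + 1) + 1 = E + G + M₀ - x by ring] at h2
  have h3 : gam G + gam G = G := by unfold gam; ring
  calc supE G j E M₀ x * subE G j E M₀ x
      = (Cp (gam G) (x - gam G) * Cm (gam G) (x + 1 - gam G)) *
        (Cp j (E + G + M₀ - (x + 1)) * Cm j (E + G + M₀ - x)) := by
        unfold supE subE; ring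
    _ = _ := by
        rw [h1, h2, ← h3]; ring

/-! ### The Hahn difference operator -/

/-- The coefficient `B` of the forward difference in the Hahn difference operator. -/
def hahnB (N : ℕ) (α : ℂ) (x : ℕ) : ℂ := (x + α + 1) * (x - N)

/-- The coefficient `D` of the backward difference in the Hahn difference operator. -/
def hahnD (N : ℕ) (β : ℂ) (x : ℕ) : ℂ := x * (x - β - N - 1)

/-- The Hahn difference operator is upper bidiagonal on binomial functions. At `x = 0` the truncated
`x - 1` is harmless since `hahnD` vanishes there. -/
theorem hahn_choose (N : ℕ) (α β : ℂ) (x k : ℕ) :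
    hahnB N α x * ((x + 1).choose k - x.choose k) - hahnD N β x * (x.choose k - (x - 1).choose k) =
      k * (k + α + β + 1) * x.choose k +
        (if k = 0 then 0 else (k + α) * (k - 1 - N) * x.choose (k - 1)) := by
  rcases k with _ | k
  · simp
  rcases x with _ | x
  · rcases k with _ | k
    · simp [hahnB, hahnD]
      exact Or.inl (add_comm _ _)
    · simp [hahnB, hahnD, Nat.choose_eq_zero_of_lt (show 1 < k + 1 + 1 by omega)]
  have e1 : ((x + 1 + 1).choose (k + 1) : ℂ) = (x + 1).choose k + (x + 1).choose (k + 1) := by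
    exact_mod_cast Nat.choose_succ_succ (x + 1) k
  have e2 : ((x + 1).choose (k + 1) : ℂ) = x.choose k + x.choose (k + 1) := by
    exact_mod_cast Nat.choose_succ_succ x k
  have e3 : ((x : ℂ) + 1) * x.choose k = (x + 1).choose (k + 1) * (k + 1) := by
    exact_mod_cast Nat.add_one_mul_choose_eq x k
  have e4 : ((x : ℂ) + 1 + 1) * (x + 1).choose k = (x + 1 + 1).choose (k + 1) * (k + 1) := by
    exact_mod_cast Nat.add_one_mul_choose_eq (x + 1) k
  rw [e1] at e4 ⊢
  simp only [hahnB, hahnD, Nat.add_sub_cancel, if_neg (Nat.succ_ne_zero k)]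
  push_cast
  linear_combination (x + k + 2 + α - N) * e4 - (x - β - N) * e3 - ((x : ℂ) + 1) * (x - β - N) * e2

theorem sum_tridiag (N : ℕ) (a b : ℂ) (c f : ℕ → ℂ) (x : Fin (N + 1)) :
    ∑ y : Fin (N + 1), ((if (y : ℕ) = x then a else 0) + (if (y : ℕ) = x + 1 then b else 0) +
        (if (y : ℕ) + 1 = x then c y else 0)) * f y =
      a * f x + (if (x : ℕ) = N then 0 else b * f (x + 1)) +
        (if (x : ℕ) = 0 then 0 else c (x - 1) * f (x - 1)) := by
  have hx := x.2
  rw [Fin.sum_univ_eq_sum_range (fun y => ((if y = (x : ℕ) then a else 0) +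
    (if y = x + 1 then b else 0) + (if y + 1 = x then c y else 0)) * f y)]
  simp only [add_mul, Finset.sum_add_distrib, ite_mul, zero_mul]
  congr 1
  · congr 1
    · simp
      omega
    · rw [Finset.sum_ite_eq']
      by_cases h : (x : ℕ) = N <;> simp [h]
      omega
  · obtain ⟨x, hx'⟩ := x
    rcases x with _ | x
    · simp
    · simp
      omega

/-- The upper bidiagonal matrix of `q₀ - L` in the basis of binomial functions, `L` being the Hahn
difference operator. -/
def hahnU (N : ℕ) (α β q₀ : ℂ) : Matrix (Fin (N + 1)) (Fin (N + 1)) ℂ := fun l k =>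
  (if k = l then q₀ - k * (k + α + β + 1) else 0) -
    (if (l : ℕ) + 1 = k then (k + α) * (k - 1 - N) else 0)

theorem charpoly_hahnU (N : ℕ) (α β q₀ : ℂ) : (hahnU N α β q₀).charpoly =
    ∏ k : Fin (N + 1), (Polynomial.X - Polynomial.C (q₀ - k * (k + α + β + 1))) := by
  rw [Matrix.charpoly_of_isUpperTriangular]
  · simp [hahnU]
  · intro l k h
    have h' : (k : ℕ) < l := h
    have h2 : k ≠ l := by rintro rfl; omega
    simp only [hahnU, if_neg h2]
    rw [if_neg (by omega), sub_zero]

/-- Matrices intertwined by an invertible matrix have the same characteristic polynomial. -/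
theorem charpoly_of_intertwine {n : Type*} [Fintype n] [DecidableEq n] (A P U : Matrix n n ℂ)
    (hP : P.det ≠ 0) (h : A * P = P * U) : A.charpoly = U.charpoly := by
  have hu : IsUnit P := (Matrix.isUnit_iff_isUnit_det P).2 hP.isUnit
  obtain ⟨P, rfl⟩ := hu
  rw [← Matrix.charpoly_units_conj P U, ← h, ← Matrix.coe_units_inv]
  simp

/-- A tridiagonal matrix with the same diagonal and the same products of opposite off-diagonal entries
as `q₀ - L`, `L` the Hahn difference operator, has characteristic polynomial
`∏ (X - q₀ + k(k+α+β+1))`, provided its superdiagonal and that of `L` do not vanish. -/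
theorem charpoly_tridiag (N : ℕ) (α β q₀ : ℂ) (b c : ℕ → ℂ)
    (hb : ∀ x < N, b x ≠ 0) (hB : ∀ x < N, hahnB N α x ≠ 0)
    (hbc : ∀ x < N, b x * c x = hahnB N α x * hahnD N β (x + 1))
    (A : Matrix (Fin (N + 1)) (Fin (N + 1)) ℂ)
    (hA : ∀ x y, A x y = (if (y : ℕ) = x then q₀ + hahnB N α x + hahnD N β x else 0) +
      (if (y : ℕ) = x + 1 then b x else 0) + (if (y : ℕ) + 1 = x then c y else 0)) :
    A.charpoly = ∏ k : Fin (N + 1), (Polynomial.X - Polynomial.C (q₀ - k * (k + α + β + 1))) := by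
  rw [← charpoly_hahnU]
  -- The diagonal gauge transforming the superdiagonal `b` into `-B`; the subdiagonal then becomes `-D`.
  set d : ℕ → ℂ := fun n => ∏ x ∈ Finset.range n, (-hahnB N α x / b x) with hd
  have hd0 : ∀ n ≤ N, d n ≠ 0 := by
    intro n hn
    refine Finset.prod_ne_zero_iff.2 fun x hx => ?_
    have := Finset.mem_range.1 hx
    exact div_ne_zero (neg_ne_zero.2 (hB x (by omega))) (hb x (by omega))
  have hbd : ∀ x < N, b x * d (x + 1) = -hahnB N α x * d x := by
    intro x hx
    have := hb x hx
    simp only [hd, Finset.prod_range_succ]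
    field_simp
  have hcd : ∀ x < N, c x * d x = -hahnD N β (x + 1) * d (x + 1) := by
    intro x hx
    apply mul_left_cancel₀ (hb x hx)
    linear_combination d x * hbc x hx + hahnD N β (x + 1) * hbd x hx
  -- The gauge composed with the (unipotent lower triangular) Pascal matrix.
  set P : Matrix (Fin (N + 1)) (Fin (N + 1)) ℂ := fun x k => d x * (x : ℕ).choose k with hPdef
  refine charpoly_of_intertwine A P _ ?_ ?_
  · rw [Matrix.det_of_isLowerTriangular]
    · refine Finset.prod_ne_zero_iff.2 fun x _ => ?_
      simpa [hPdef] using hd0 x (by omega)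
    · intro x k h
      have h' : (x : ℕ) < k := h
      simp [hPdef, Nat.choose_eq_zero_of_lt h']
  · ext x k
    rw [Matrix.mul_apply, Matrix.mul_apply]
    simp only [hA]
    rw [show (∑ y : Fin (N + 1), _ * P y k) = _ from sum_tridiag N _ _ c
      (fun y => d y * y.choose k) x]
    have hU : ∑ l, P x l * hahnU N α β q₀ l k = d x * ((q₀ - k * (k + α + β + 1)) *
        (x : ℕ).choose k - (if (k : ℕ) = 0 then 0 else (k + α) * (k - 1 - N) *
          (x : ℕ).choose (k - 1))) := by
      have := sum_tridiag N (q₀ - k * (k + α + β + 1)) 0 (fun _ => -((k + α) * (k - 1 - N)))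
        (fun l => d x * (x : ℕ).choose l) k
      simp only [zero_mul, ite_self, add_zero] at this
      calc ∑ l, P x l * hahnU N α β q₀ l k = _ := Finset.sum_congr rfl fun l _ => by
            simp only [hPdef, hahnU, sub_eq_add_neg, Fin.ext_iff, eq_comm (a := (k : ℕ)) (b := l),
              neg_ite, neg_zero, mul_comm (d x * _)]
        _ = _ := this
        _ = _ := by split_ifs <;> ring
    rw [hU]
    have key := hahn_choose N α β x k
    have t1 : (if (x : ℕ) = N then 0 else b x * (d (x + 1) * ((x : ℕ) + 1).choose k)) =
        -hahnB N α x * d x * ((x : ℕ) + 1).choose k := by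
      split_ifs with h
      · simp [hahnB, h]
      · rw [← hbd x (by omega)]; ring
    have t2 : (if (x : ℕ) = 0 then 0 else c (x - 1) * (d (x - 1) * ((x : ℕ) - 1).choose k)) =
        -hahnD N β x * d x * ((x : ℕ) - 1).choose k := by
      split_ifs with h
      · simp [hahnD, h]
      · have := hcd (x - 1) (by omega)
        rw [Nat.sub_add_cancel (by omega)] at this
        rw [← this]; ring
    rw [t1, t2]
    linear_combination -d x * key

/-! ### The characteristic polynomial of the Casimir -/

/-- For real j with 2j ∈ ℤ and j - ε ∉ ℤ, the characteristic polynomial of the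
restriction of 𝒬 to any V_M is Π_{μ=-γ}^{γ} (X - q_(μ)). -/
theorem charpoly_QM (G : ℕ) (hG : 1 ≤ G) (Er jr : ℝ) (hE : Er = 0 ∨ Er = 1 / 2)
    (hjZ : ∃ n : ℤ, 2 * jr = (n : ℝ)) (hje : ¬ ∃ n : ℤ, jr - Er = (n : ℝ)) :
    ∀ M₀ : ℤ,
      (QMmat G (jr : ℂ) (Er : ℂ) M₀).charpoly =
        ∏ t : Fin (G + 1), (Polynomial.X - Polynomial.C (qc G (jr : ℂ) t)) := by
  intro M₀
  have hm : ∀ n : ℤ, (jr : ℂ) - Er ≠ n := by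
    intro n h
    exact hje ⟨n, by exact_mod_cast h⟩
  obtain ⟨N, hN⟩ := hjZ
  have hN' : 2 * (jr : ℂ) = N := by exact_mod_cast hN
  have hp : ∀ n : ℤ, (jr : ℂ) + Er ≠ n := by
    intro n h
    apply hm (N - n)
    push_cast
    linear_combination hN' - h
  have hGx : ∀ x < G, (G : ℂ) - x ≠ 0 := by
    intro x hx h
    have : (G : ℂ) = x := sub_eq_zero.1 h
    have : G = x := by exact_mod_cast this
    omega
  have hα : ∀ x : ℕ, (jr : ℂ) - (Er + G + M₀ - x) + 1 ≠ 0 := by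
    intro x h
    apply hm (G + M₀ - x - 1)
    push_cast
    linear_combination h
  have hβ : ∀ x : ℕ, (jr : ℂ) + (Er + G + M₀ - x) ≠ 0 := by
    intro x h
    apply hp (-(G + M₀ - x))
    push_cast
    linear_combination h
  rw [charpoly_tridiag G (jr - Er - G - M₀) (jr + Er + M₀)
    (-((jr - gam G) * (jr - gam G + 1))) (supE G jr Er M₀) (subE G jr Er M₀)
    ?_ ?_ ?_ (QMmat G jr Er M₀) ?_]
  · refine Finset.prod_congr rfl fun t _ => ?_
    congr 2
    simp only [qc, muc, gam]
    ring
  · intro x hx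
    refine left_ne_zero_of_mul (b := subE G jr Er M₀ x) ?_
    rw [supE_mul_subE]
    exact mul_ne_zero (mul_ne_zero (hGx x hx) (by exact_mod_cast x.succ_ne_zero))
      (mul_ne_zero (hα x) (hβ x))
  · intro x hx
    rw [show hahnB G (jr - Er - G - M₀) x =
      ((jr : ℂ) - (Er + G + M₀ - x) + 1) * -((G : ℂ) - x) by unfold hahnB; ring]
    exact mul_ne_zero (hα x) (neg_ne_zero.2 (hGx x hx))
  · intro x _
    rw [supE_mul_subE, hahnB, hahnD]
    push_cast
    ring
  · intro x y
    rw [QMmat_apply]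
    congr 3
    simp only [diagE, hahnB, hahnD, gam]
    ring

end
end
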